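/- For every smooth function ψ : ℝ³ → ℂ⁴, Dirac's operator K = β(Id + Σ·L) satisfies K(Kψ) = L²ψ + β(Kψ), and K commutes with β, i.e. β(Kψ) = K(βψ). -/

import Mathlib

noncomputable section

open Matrix

/-- Physical space ℝ³. -/
abbrev E3 := EuclideanSpace ℝ (Fin 3)

/-- The Pauli matrices σ₁, σ₂, σ₃ (indexed by `Fin 3`, with `pauli 0 = σ₁`, etc.). -/
def pauli : Fin 3 → Matrix (Fin 2) (Fin 2) ℂ
  | 0 => !![0, 1; 1, 0]
  | 1 => !![0, -Complex.I; Complex.I, 0]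
  | 2 => !![1, 0; 0, -1]

/-- The 4×4 block matrix `[[A, B], [C, D]]` built from 2×2 blocks. -/
def qblock (A B C D : Matrix (Fin 2) (Fin 2) ℂ) : Matrix (Fin 4) (Fin 4) ℂ :=
  Matrix.reindex finSumFinEquiv finSumFinEquiv (Matrix.fromBlocks A B C D)

/-- The Dirac matrix `β = γ⁰ = [[I₂,0],[0,−I₂]]`. -/
def betaM : Matrix (Fin 4) (Fin 4) ℂ := qblock 1 0 0 (-1)

/-- The spin matrices `Σⱼ = [[σⱼ,0],[0,σⱼ]]` for j = 1,2,3. -/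
def SigM (j : Fin 3) : Matrix (Fin 4) (Fin 4) ℂ := qblock (pauli j) 0 0 (pauli j)

/-- The partial derivative `∂ⱼψ` of a ℂ⁴-valued function on ℝ³. -/
def pd (j : Fin 3) (ψ : E3 → Fin 4 → ℂ) : E3 → Fin 4 → ℂ :=
  fun x => fderiv ℝ ψ x (EuclideanSpace.single j 1)

/-- The orbital angular momentum operator `Lⱼψ = −i (x × ∇ψ)ⱼ` (cyclic indices in `Fin 3`). -/
def Lop (j : Fin 3) (ψ : E3 → Fin 4 → ℂ) : E3 → Fin 4 → ℂ :=
  fun x => (-Complex.I) • (x (j + 1) • pd (j + 2) ψ x - x (j + 2) • pd (j + 1) ψ x)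

/-- The operator `L²ψ = Σⱼ Lⱼ(Lⱼψ)`. -/
def L2op (ψ : E3 → Fin 4 → ℂ) : E3 → Fin 4 → ℂ :=
  fun x => ∑ j, Lop j (Lop j ψ) x

/-- The operator `(Σ·L)ψ = Σⱼ Σⱼ(Lⱼψ)`. -/
def SigL (ψ : E3 → Fin 4 → ℂ) : E3 → Fin 4 → ℂ :=
  fun x => ∑ j, (SigM j).mulVec (Lop j ψ x)

/-- Dirac's operator `Kψ = β(ψ + (Σ·L)ψ)`. -/
def Kop (ψ : E3 → Fin 4 → ℂ) : E3 → Fin 4 → ℂ :=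
  fun x => betaM.mulVec (ψ x + SigL ψ x)


lemma betaM_mul_self : betaM * betaM = 1 := by
  simp [betaM, qblock, Matrix.reindex_apply, Matrix.submatrix_mul_equiv, Matrix.fromBlocks_multiply]

lemma SigM_mul_betaM (j : Fin 3) : SigM j * betaM = betaM * SigM j := by
  simp [betaM, SigM, qblock, Matrix.submatrix_mul_equiv, Matrix.fromBlocks_multiply]

lemma SigM_mul (j k : Fin 3) :
    SigM j * SigM k = qblock (pauli j * pauli k) 0 0 (pauli j * pauli k) := by
  simp [SigM, qblock, Matrix.submatrix_mul_equiv, Matrix.fromBlocks_multiply]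

lemma smul_SigM (c : ℂ) (j : Fin 3) : c • SigM j = qblock (c • pauli j) 0 0 (c • pauli j) := by
  ext a b
  simp only [SigM, qblock, Matrix.reindex_apply, Matrix.smul_apply, Matrix.submatrix_apply]
  rcases (finSumFinEquiv (m := 2) (n := 2)).symm a with a | a <;>
    rcases (finSumFinEquiv (m := 2) (n := 2)).symm b with b | b <;> simp

lemma SigM_mul_self (j : Fin 3) : SigM j * SigM j = 1 := by
  have h : pauli j * pauli j = 1 := by
    fin_cases j <;> ext a b <;> fin_cases a <;> fin_cases b <;>
      simp [pauli, Matrix.mul_apply, Fin.sum_univ_two]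
  rw [SigM_mul, h]
  simp [qblock]

lemma SigM_mul_succ (j : Fin 3) : SigM j * SigM (j + 1) = Complex.I • SigM (j + 2) := by
  have h : pauli j * pauli (j + 1) = Complex.I • pauli (j + 2) := by
    fin_cases j <;> ext a b <;> fin_cases a <;> fin_cases b <;>
      simp [pauli, Matrix.mul_apply, Fin.sum_univ_two]
  rw [SigM_mul, smul_SigM, h]

lemma SigM_succ_mul (j : Fin 3) : SigM (j + 1) * SigM j = (-Complex.I) • SigM (j + 2) := by
  have h : pauli (j + 1) * pauli j = (-Complex.I) • pauli (j + 2) := by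
    fin_cases j <;> ext a b <;> fin_cases a <;> fin_cases b <;>
      simp [pauli, Matrix.mul_apply, Fin.sum_univ_two]
  rw [SigM_mul, smul_SigM, h]

variable {ψ φ : E3 → Fin 4 → ℂ}

lemma pd_mulVec (M : Matrix (Fin 4) (Fin 4) ℂ) (j : Fin 3) (hψ : Differentiable ℝ ψ) :
    pd j (fun y => M.mulVec (ψ y)) = fun y => M.mulVec (pd j ψ y) := by
  funext x
  let T : (Fin 4 → ℂ) →L[ℝ] (Fin 4 → ℂ) := (M.mulVecLin.restrictScalars ℝ).toContinuousLinearMap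
  exact congrArg (· (EuclideanSpace.single j 1))
    (T.hasFDerivAt.comp x (hψ x).hasFDerivAt).fderiv

lemma Lop_mulVec (M : Matrix (Fin 4) (Fin 4) ℂ) (j : Fin 3) (hψ : Differentiable ℝ ψ) :
    Lop j (fun y => M.mulVec (ψ y)) = fun y => M.mulVec (Lop j ψ y) := by
  funext x
  simp only [Lop, pd_mulVec M _ hψ, Matrix.mulVec_smul, Matrix.mulVec_sub]

lemma Lop_add (j : Fin 3) (hψ : Differentiable ℝ ψ) (hφ : Differentiable ℝ φ) :
    Lop j (fun y => ψ y + φ y) = fun y => Lop j ψ y + Lop j φ y := by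
  funext x
  simp only [Lop, pd, fderiv_fun_add (hψ x) (hφ x), _root_.add_apply]
  module

lemma Lop_sum (j : Fin 3) {f : Fin 3 → E3 → Fin 4 → ℂ} (hf : ∀ k, Differentiable ℝ (f k)) :
    Lop j (fun y => ∑ k, f k y) = fun y => ∑ k, Lop j (f k) y := by
  funext x
  simp only [Lop, pd, fderiv_fun_sum fun k _ => hf k x, _root_.sum_apply,
    Finset.smul_sum, ← Finset.sum_sub_distrib]

lemma contDiff_pd (j : Fin 3) (hψ : ContDiff ℝ (⊤ : ℕ∞) ψ) : ContDiff ℝ (⊤ : ℕ∞) (pd j ψ) :=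
  (hψ.fderiv_right (m := (⊤ : ℕ∞)) (by simp)).clm_apply contDiff_const

lemma contDiff_Lop (j : Fin 3) (hψ : ContDiff ℝ (⊤ : ℕ∞) ψ) : ContDiff ℝ (⊤ : ℕ∞) (Lop j ψ) := by
  have h (k : Fin 3) := contDiff_pd k hψ
  unfold Lop
  fun_prop

lemma contDiff_mulVec (M : Matrix (Fin 4) (Fin 4) ℂ) (hψ : ContDiff ℝ (⊤ : ℕ∞) ψ) :
    ContDiff ℝ (⊤ : ℕ∞) (fun y => M.mulVec (ψ y)) :=
  (M.mulVecLin.restrictScalars ℝ).toContinuousLinearMap.contDiff.comp hψ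

lemma contDiff_SigL (hψ : ContDiff ℝ (⊤ : ℕ∞) ψ) : ContDiff ℝ (⊤ : ℕ∞) (SigL ψ) :=
  ContDiff.sum fun j _ => contDiff_mulVec _ (contDiff_Lop j hψ)

lemma differentiable_of_contDiff_top (hψ : ContDiff ℝ (⊤ : ℕ∞) ψ) : Differentiable ℝ ψ :=
  hψ.differentiable (by simp)

lemma pd_comm (j k : Fin 3) (hψ : ContDiff ℝ (⊤ : ℕ∞) ψ) (x : E3) :
    pd j (pd k ψ) x = pd k (pd j ψ) x := by
  have hd : DifferentiableAt ℝ (fderiv ℝ ψ) x :=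
    (hψ.fderiv_right (m := (⊤ : ℕ∞)) (by simp)).differentiable (by simp) x
  have h (a b : Fin 3) : pd a (pd b ψ) x =
      fderiv ℝ (fderiv ℝ ψ) x (EuclideanSpace.single a 1) (EuclideanSpace.single b 1) := by
    unfold pd
    rw [fderiv_clm_apply hd (differentiableAt_const _)]
    simp
  rw [h, h]
  refine hψ.contDiffAt.isSymmSndFDerivAt ?_ _ _
  rw [minSmoothness_of_isRCLikeNormedField]
  exact WithTop.coe_le_coe.2 (le_top : (2 : ℕ∞) ≤ ⊤)

lemma pd_coord_smul (j k : Fin 3) (hψ : Differentiable ℝ ψ) (x : E3) :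
    pd j (fun y => y k • ψ y) x = (if k = j then (1 : ℝ) else 0) • ψ x + x k • pd j ψ x := by
  have hc : HasFDerivAt (fun y : E3 => y k) (EuclideanSpace.proj k : E3 →L[ℝ] ℝ) x :=
    (EuclideanSpace.proj k : E3 →L[ℝ] ℝ).hasFDerivAt
  rw [pd, (hc.fun_smul (hψ x).hasFDerivAt).fderiv]
  simp [pd, add_comm]

lemma pd_Lop (j k : Fin 3) (hψ : ContDiff ℝ (⊤ : ℕ∞) ψ) (x : E3) :
    pd k (Lop j ψ) x = (-Complex.I) •
      (((if j + 1 = k then (1 : ℝ) else 0) • pd (j + 2) ψ x + x (j + 1) • pd k (pd (j + 2) ψ) x) -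
        ((if j + 2 = k then (1 : ℝ) else 0) • pd (j + 1) ψ x
          + x (j + 2) • pd k (pd (j + 1) ψ) x)) := by
  have hd (a : Fin 3) := differentiable_of_contDiff_top (contDiff_pd a hψ)
  have hs (a b : Fin 3) : DifferentiableAt ℝ (fun y : E3 => y a • pd b ψ y) x := by
    have := hd b
    fun_prop
  rw [← pd_coord_smul k _ (hd _), ← pd_coord_smul k _ (hd _)]
  unfold Lop
  rw [pd, fderiv_fun_const_smul ((hs _ _).fun_sub (hs _ _)), fderiv_fun_sub (hs _ _) (hs _ _)]
  rfl

lemma Lop_commutator (j : Fin 3) (hψ : ContDiff ℝ (⊤ : ℕ∞) ψ) (x : E3) :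
    Lop j (Lop (j + 1) ψ) x - Lop (j + 1) (Lop j ψ) x = Complex.I • Lop (j + 2) ψ x := by
  have hL (a b : Fin 3) : Lop a (Lop b ψ) x = (-Complex.I) •
      (x (a + 1) • pd (a + 2) (Lop b ψ) x - x (a + 2) • pd (a + 1) (Lop b ψ) x) := rfl
  have h10 := pd_comm 1 0 hψ x
  have h20 := pd_comm 2 0 hψ x
  have h21 := pd_comm 2 1 hψ x
  simp only [hL, pd_Lop _ _ hψ]
  simp only [Lop]
  fin_cases j <;> simp [h10, h20, h21] <;> ext i <;> simp <;> ring_nf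

lemma SigL_SigL (hψ : ContDiff ℝ (⊤ : ℕ∞) ψ) (x : E3) :
    SigL (SigL ψ) x = L2op ψ x - SigL ψ x := by
  have hL (j : Fin 3) := differentiable_of_contDiff_top (contDiff_Lop j hψ)
  have hM (j : Fin 3) :=
    differentiable_of_contDiff_top (contDiff_mulVec (SigM j) (contDiff_Lop j hψ))
  have h (j : Fin 3) : Lop j (SigL ψ) x = ∑ k, (SigM k).mulVec (Lop j (Lop k ψ) x) := by
    unfold SigL
    rw [Lop_sum j hM]
    simp only [Lop_mulVec _ j (hL _)]
  have c0 := Lop_commutator 0 hψ x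
  have c1 := Lop_commutator 1 hψ x
  have c2 := Lop_commutator 2 hψ x
  have s0 := SigM_mul_succ 0
  have s1 := SigM_mul_succ 1
  have s2 := SigM_mul_succ 2
  have t0 := SigM_succ_mul 0
  have t1 := SigM_succ_mul 1
  have t2 := SigM_succ_mul 2
  simp only [Fin.reduceAdd, zero_add, sub_eq_iff_eq_add] at c0 c1 c2 s0 s1 s2 t0 t1 t2
  rw [SigL]
  simp only [h, L2op, SigL, Fin.sum_univ_three, Matrix.mulVec_add, Matrix.mulVec_mulVec,
    SigM_mul_self, s0, s1, s2, t0, t1, t2, c0, c1, c2, Matrix.one_mulVec, Matrix.smul_mulVec,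
    Matrix.mulVec_smul, smul_smul, Complex.I_mul_I]
  module

lemma SigL_betaM_mulVec (hψ : Differentiable ℝ ψ) (x : E3) :
    SigL (fun y => betaM.mulVec (ψ y)) x = betaM.mulVec (SigL ψ x) := by
  simp only [SigL, Lop_mulVec _ _ hψ, Matrix.mulVec_sum, Matrix.mulVec_mulVec, SigM_mul_betaM]

lemma SigL_add (hψ : Differentiable ℝ ψ) (hφ : Differentiable ℝ φ) (x : E3) :
    SigL (fun y => ψ y + φ y) x = SigL ψ x + SigL φ x := by
  simp only [SigL, Lop_add _ hψ hφ, Matrix.mulVec_add, Finset.sum_add_distrib]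

/-- For smooth `ψ : ℝ³ → ℂ⁴`, Dirac's operator `K = β(Id + Σ·L)` satisfies
`K(Kψ) = L²ψ + β(Kψ)`, and `K` commutes with `β`. -/
theorem Kop_sq_and_Kop_comm_beta (ψ : E3 → Fin 4 → ℂ) (hψ : ContDiff ℝ (⊤ : ℕ∞) ψ) (x : E3) :
    Kop (Kop ψ) x = L2op ψ x + betaM.mulVec (Kop ψ x) ∧
      betaM.mulVec (Kop ψ x) = Kop (fun y => betaM.mulVec (ψ y)) x := by
  have hd := differentiable_of_contDiff_top hψ
  have hS := differentiable_of_contDiff_top (contDiff_SigL hψ)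
  constructor
  · unfold Kop
    rw [SigL_betaM_mulVec (hd.fun_add hS), SigL_add hd hS, SigL_SigL hψ]
    simp only [← Matrix.mulVec_add, Matrix.mulVec_mulVec, betaM_mul_self, Matrix.one_mulVec]
    abel
  · simp only [Kop, SigL_betaM_mulVec hd, Matrix.mulVec_add]

end
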